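/- If M : [0,∞) → [0,∞) is continuous, M(t) > 0 for all t > 0, and there exists γ ≥ 1 such that t·M(t) ≤ γ·𝓜(t) for all t ≥ 0 (where 𝓜(t) = ∫₀ᵗ M(τ)dτ), then 𝓜(t) ≥ 𝓜(1)·t^γ for all t ∈ [0,1]. -/

import Mathlib

open MeasureTheory Set

/-!
Since `t * M t ≤ γ * 𝓜 t`, the derivative `(t * M t - γ * 𝓜 t) * t ^ (-γ - 1)` of
`𝓜 t * t ^ (-γ)` is nonpositive, so this product is smallest at the right endpoint. Absolute
continuity of `𝓜` makes the argument work for integrable `M`.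
-/

theorem le_of_ae_deriv_nonpos {f : ℝ → ℝ} {a b : ℝ} (hab : a ≤ b)
    (hf : AbsolutelyContinuousOnInterval f a b)
    (hf' : ∀ᵐ x, x ∈ Icc a b → deriv f x ≤ 0) : f b ≤ f a := by
  have hint : ∫ x in a..b, deriv f x ≤ ∫ _ in a..b, (0 : ℝ) :=
    intervalIntegral.integral_mono_ae_restrict hab hf.intervalIntegrable_deriv
      intervalIntegrable_const ((ae_restrict_iff' measurableSet_Icc).2 hf')
  rwa [hf.integral_deriv_eq_sub, intervalIntegral.integral_zero, sub_nonpos] at hint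

theorem absolutelyContinuousOnInterval_rpow_const {a b : ℝ} (p : ℝ) (h0 : (0 : ℝ) ∉ uIcc a b) :
    AbsolutelyContinuousOnInterval (fun x => x ^ p) a b :=
  (contDiffOn_id.rpow_const_of_ne fun _ hx => ne_of_mem_of_not_mem hx h0)
    |>.absolutelyContinuousOnInterval

theorem deriv_mul_rpow_neg {f : ℝ → ℝ} {x : ℝ} (γ : ℝ) (hf : DifferentiableAt ℝ f x) (hx : 0 < x) :
    deriv (fun y => f y * y ^ (-γ)) x = (x * deriv f x - γ * f x) * x ^ (-γ - 1) := by
  have hpow : x ^ (-γ) = x ^ (-γ - 1) * x := by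
    rw [Real.rpow_sub_one hx.ne', div_mul_cancel₀ _ hx.ne']
  have hderiv := hf.hasDerivAt.mul (Real.hasDerivAt_rpow_const (p := -γ) (Or.inl hx.ne'))
  refine hderiv.deriv.trans ?_
  rw [hpow]
  ring

theorem mul_rpow_le_mul_rpow_of_ae_mul_deriv_le {f : ℝ → ℝ} {a b γ : ℝ} (ha : 0 < a) (hab : a ≤ b)
    (hf : AbsolutelyContinuousOnInterval f a b)
    (hf' : ∀ᵐ x, x ∈ Icc a b → x * deriv f x ≤ γ * f x) : f b * a ^ γ ≤ f a * b ^ γ := by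
  have hb : 0 < b := ha.trans_le hab
  have h0 : (0 : ℝ) ∉ uIcc a b := by
    rw [uIcc_of_le hab]
    exact fun h => ha.not_ge h.1
  have hquot : f b * b ^ (-γ) ≤ f a * a ^ (-γ) := by
    refine le_of_ae_deriv_nonpos hab
      (hf.fun_mul (absolutelyContinuousOnInterval_rpow_const (-γ) h0)) ?_
    filter_upwards [hf', hf.ae_differentiableAt] with x hle hdiff hx
    have hx0 : 0 < x := ha.trans_le hx.1
    rw [deriv_mul_rpow_neg γ (hdiff (Icc_subset_uIcc hx)) hx0]
    exact mul_nonpos_of_nonpos_of_nonneg (sub_nonpos.2 (hle hx)) (Real.rpow_nonneg hx0.le _)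
  rwa [Real.rpow_neg hb.le, Real.rpow_neg ha.le, ← div_eq_mul_inv, ← div_eq_mul_inv,
    div_le_div_iff₀ (Real.rpow_pos_of_pos hb γ) (Real.rpow_pos_of_pos ha γ)] at hquot

theorem mul_zero_rpow_le_mul_rpow_of_ae_mul_deriv_le {f : ℝ → ℝ} {b γ : ℝ} (hb : 0 ≤ b)
    (hf0 : 0 ≤ f 0) (hf : AbsolutelyContinuousOnInterval f 0 b)
    (hf' : ∀ᵐ x, x ∈ Icc 0 b → x * deriv f x ≤ γ * f x) : f b * 0 ^ γ ≤ f 0 * b ^ γ := by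
  rcases eq_or_ne γ 0 with rfl | hγ
  · have hle : f b ≤ f 0 := by
      refine le_of_ae_deriv_nonpos hb hf ?_
      filter_upwards [hf', Measure.ae_ne volume 0] with x hle hne hx
      rw [zero_mul] at hle
      exact nonpos_of_mul_nonpos_right (hle hx) (hx.1.lt_of_ne' hne)
    simpa only [Real.rpow_zero, mul_one] using hle
  · rw [Real.zero_rpow hγ, mul_zero]
    exact mul_nonneg hf0 (Real.rpow_nonneg hb γ)

theorem stmt_0_general {M : ℝ → ℝ} {γ b : ℝ} (hM : IntervalIntegrable M volume 0 b)
    (hAR : ∀ᵐ t, t ∈ Icc 0 b → t * M t ≤ γ * ∫ τ in (0 : ℝ)..t, M τ) :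
    ∀ t ∈ Icc 0 b,
      (∫ τ in (0 : ℝ)..b, M τ) * t ^ γ ≤ (∫ τ in (0 : ℝ)..t, M τ) * b ^ γ := by
  intro t ht
  have hAC := hM.absolutelyContinuousOnInterval_intervalIntegral left_mem_uIcc
  have hderiv : ∀ᵐ x, x ∈ Icc 0 b →
      x * deriv (fun y => ∫ τ in (0 : ℝ)..y, M τ) x ≤ γ * ∫ τ in (0 : ℝ)..x, M τ := by
    filter_upwards [hM.ae_hasDerivAt_integral, hAR] with x hFTC hle hx
    rw [(hFTC (Icc_subset_uIcc hx) 0 left_mem_uIcc).deriv]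
    exact hle hx
  rcases ht.1.eq_or_lt with rfl | ht0
  · exact mul_zero_rpow_le_mul_rpow_of_ae_mul_deriv_le ht.2
      intervalIntegral.integral_same.ge hAC hderiv
  · refine mul_rpow_le_mul_rpow_of_ae_mul_deriv_le ht0 ht.2
      (hAC.mono (uIcc_subset_uIcc_right (Icc_subset_uIcc ht))) ?_
    filter_upwards [hderiv] with x hle hx
    exact hle ⟨ht.1.trans hx.1, hx.2⟩

theorem stmt_0 (M : ℝ → ℝ) (γ : ℝ)
    (hMcont : Continuous M)
    (hMnonneg : ∀ t, 0 ≤ t → 0 ≤ M t)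
    (hMpos : ∀ t, 0 < t → 0 < M t)
    (hγ : 1 ≤ γ)
    (hAR : ∀ t, 0 ≤ t → t * M t ≤ γ * ∫ τ in (0:ℝ)..t, M τ) :
    ∀ t ∈ Icc (0:ℝ) 1,
      (∫ τ in (0:ℝ)..1, M τ) * t ^ γ ≤ ∫ τ in (0:ℝ)..t, M τ := by
  simpa only [Real.one_rpow, mul_one] using
    stmt_0_general (hMcont.intervalIntegrable 0 1) (ae_of_all _ fun t ht => hAR t ht.1)
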